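/- Let $d \ge 1$ and let $\sigma$ be a positive Borel measure on $\mathbb{R}^d$ with $\sigma(\{0\}) = 0$, finite on bounded sets, and tempered in the sense that there exist constants $C, N > 0$ with $\sigma(B_r(0)) \le C(1 + r)^N$ for all $r > 0$, where $B_r(0)$ is the open Euclidean ball of radius $r$ centered at the origin. Then $$\lim_{\varepsilon \to 0^+} \frac{\sigma(B_{\varepsilon}(0))}{\mathrm{Vol}(B_{\varepsilon}(0))} = 0 \quad \Longleftrightarrow \quad \lim_{\tau \to +\infty} \tau^{d/2} \int_{\mathbb{R}^d} e^{-2\tau\|y\|^2}\, d\sigma(y) = 0,$$ where $\mathrm{Vol}$ denotes Lebesgue measure on $\mathbb{R}^d$. -/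

import Mathlib

open MeasureTheory Filter

/-!
For every `b > 0`, the layer cake formula expresses the Gaussian integral through the masses of
balls: `∫ exp (-b * dist y x ^ 2) ∂σ(y) = ∫₀^∞ exp (-t) * σ (ball x √(t / b)) dt`. If the mass
of small balls is `o(r ^ p)`, the part of the Gaussian integral over a fixed small ball is
therefore at most a small multiple of `Γ(p / 2 + 1) * b ^ (-p / 2)`, while the part outside it
decays exponentially in `b` as soon as one of the Gaussian integrals converges. Conversely,
`exp (-b * dist y x ^ 2) ≥ exp (-1)` on the ball of radius `b ^ (-1 / 2)`, so Chebyshev's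
inequality bounds the mass of this ball by the Gaussian integral.
-/

open Metric Set
open scoped Topology

lemma lintegral_exp_neg_eq_lintegral_meas_lt {α : Type*} [MeasurableSpace α] (μ : Measure α)
    {f : α → ℝ} (hf : AEMeasurable f μ) :
    ∫⁻ a, ENNReal.ofReal (Real.exp (-f a)) ∂μ =
      ∫⁻ t, ENNReal.ofReal (Real.exp (-t)) * μ {a | f a < t} := by
  have himage : (fun t : ℝ => Real.exp (-t)) '' univ = Ioi 0 := by
    rw [image_univ, ← Real.range_exp]
    exact neg_surjective.range_comp Real.exp
  have hderiv : ∀ t ∈ univ, HasDerivWithinAt (fun t : ℝ => Real.exp (-t)) (-Real.exp (-t)) univ t :=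
    fun t _ => by simpa using! (hasDerivAt_neg t).exp.hasDerivWithinAt (s := univ)
  have hinj : InjOn (fun t : ℝ => Real.exp (-t)) univ :=
    (Real.exp_injective.comp neg_injective).injOn
  rw [lintegral_eq_lintegral_meas_lt μ (.of_forall fun _ => (Real.exp_pos _).le) (by fun_prop),
    ← himage, lintegral_image_eq_lintegral_abs_deriv_mul .univ hderiv hinj, setLIntegral_univ]
  simp only [abs_neg, Real.abs_exp, Real.exp_lt_exp, neg_lt_neg_iff]

lemma one_add_rpow_le_exp_mul_exp_sq {N a r : ℝ} (hN : 0 ≤ N) (ha : 0 < a) (hr : 0 ≤ r) :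
    (1 + r) ^ N ≤ Real.exp (N ^ 2 / (4 * a)) * Real.exp (a * r ^ 2) := by
  have hyoung : r * N ≤ N ^ 2 / (4 * a) + a * r ^ 2 := by
    have hsq : N ^ 2 / (4 * a) + a * r ^ 2 - r * N = (N - 2 * a * r) ^ 2 / (4 * a) := by
      field_simp
      ring
    exact sub_nonneg.1 (hsq ▸ by positivity)
  calc (1 + r) ^ N ≤ Real.exp r ^ N :=
        Real.rpow_le_rpow (by positivity) (by linarith [Real.add_one_le_exp r]) hN
    _ = Real.exp (r * N) := (Real.exp_mul r N).symm
    _ ≤ Real.exp (N ^ 2 / (4 * a) + a * r ^ 2) := Real.exp_le_exp.2 hyoung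
    _ = Real.exp (N ^ 2 / (4 * a)) * Real.exp (a * r ^ 2) := Real.exp_add _ _

lemma tendsto_rpow_mul_comp_const_mul_atTop_iff {f : ℝ → ℝ} {a : ℝ} (ha : 0 < a) (s : ℝ) :
    Tendsto (fun t => t ^ s * f (a * t)) atTop (𝓝 0) ↔
      Tendsto (fun t => t ^ s * f t) atTop (𝓝 0) := by
  have hscale : (fun t : ℝ => a ^ s • (t ^ s * f (a * t))) =ᶠ[atTop]
      (fun t => t ^ s * f t) ∘ OrderIso.mulLeft₀ a ha := by
    filter_upwards [eventually_ge_atTop 0] with t ht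
    simp [Real.mul_rpow ha.le ht, mul_assoc]
  rw [← tendsto_const_smul_iff₀ (Real.rpow_pos_of_pos ha s).ne', smul_zero, tendsto_congr' hscale,
    ← tendsto_map'_iff, OrderIso.map_atTop]

section PseudoMetricSpace

variable {X : Type*} [PseudoMetricSpace X] {a b b₀ c C N p δ : ℝ}

lemma ball_subset_setOf_exp_neg_le (x : X) (hb : 0 ≤ b) (r : ℝ) :
    ball x r ⊆ {y | Real.exp (-b * r ^ 2) ≤ Real.exp (-b * dist y x ^ 2)} := fun y hy => by
  have hdist : dist y x ^ 2 ≤ r ^ 2 := by gcongr; exact (mem_ball.1 hy).le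
  simp only [mem_ofPred_eq, Real.exp_le_exp, neg_mul, neg_le_neg_iff]
  gcongr

variable [MeasurableSpace X] {σ : Measure X} {x : X}

lemma measure_ball_lt_top_of_integrable_exp
    (hint : Integrable (fun y => Real.exp (-b * dist y x ^ 2)) σ) (hb : 0 ≤ b) (r : ℝ) :
    σ (ball x r) < ⊤ :=
  (measure_mono (ball_subset_setOf_exp_neg_le x hb r)).trans_lt
    (hint.measure_ge_lt_top (Real.exp_pos _))

lemma measureReal_ball_le_exp_mul_integral_exp
    (hint : Integrable (fun y => Real.exp (-b * dist y x ^ 2)) σ) (hb : 0 ≤ b) (r : ℝ) :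
    σ.real (ball x r) ≤ Real.exp (b * r ^ 2) * ∫ y, Real.exp (-b * dist y x ^ 2) ∂σ := by
  have hchebyshev : Real.exp (-b * r ^ 2) * σ.real (ball x r) ≤
      ∫ y, Real.exp (-b * dist y x ^ 2) ∂σ :=
    calc Real.exp (-b * r ^ 2) * σ.real (ball x r)
        ≤ Real.exp (-b * r ^ 2) *
            σ.real {y | Real.exp (-b * r ^ 2) ≤ Real.exp (-b * dist y x ^ 2)} := by
          gcongr
          · exact (hint.measure_ge_lt_top (Real.exp_pos _)).ne
          · exact ball_subset_setOf_exp_neg_le x hb r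
      _ ≤ ∫ y, Real.exp (-b * dist y x ^ 2) ∂σ :=
          mul_meas_ge_le_integral_of_nonneg (.of_forall fun _ => (Real.exp_pos _).le) hint _
  rwa [neg_mul, Real.exp_neg, inv_mul_le_iff₀ (Real.exp_pos _)] at hchebyshev

variable [OpensMeasurableSpace X]

lemma lintegral_exp_neg_mul_dist_sq (σ : Measure X) (x : X) (hb : 0 < b) :
    ∫⁻ y, ENNReal.ofReal (Real.exp (-b * dist y x ^ 2)) ∂σ =
      ∫⁻ t in Ioi 0, ENNReal.ofReal (Real.exp (-t)) * σ (ball x √(t / b)) := by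
  have hball (t : ℝ) : {y | b * dist y x ^ 2 < t} = ball x √(t / b) := by
    ext y
    rw [mem_ofPred_eq, mem_ball, Real.lt_sqrt dist_nonneg, lt_div_iff₀' hb]
  simp only [neg_mul]
  rw [lintegral_exp_neg_eq_lintegral_meas_lt σ (by fun_prop)]
  simp only [hball]
  refine (setLIntegral_eq_of_support_subset fun t ht => ?_).symm
  by_contra hle
  refine ht ?_
  simp [Real.sqrt_eq_zero_of_nonpos (div_nonpos_of_nonpos_of_nonneg (not_lt.1 hle) hb.le)]

lemma lintegral_exp_neg_mul_dist_sq_le_of_measure_ball_le_rpow (hb : 0 < b) (hp : -2 < p)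
    (hc : 0 ≤ c) (hσ : ∀ r, 0 < r → σ (ball x r) ≤ ENNReal.ofReal (c * r ^ p)) :
    ∫⁻ y, ENNReal.ofReal (Real.exp (-b * dist y x ^ 2)) ∂σ ≤
      ENNReal.ofReal (c * b ^ (-(p / 2)) * Real.Gamma (p / 2 + 1)) := by
  have hp' : 0 < p / 2 + 1 := by linarith
  rw [lintegral_exp_neg_mul_dist_sq σ x hb, Real.Gamma_eq_integral hp', ← integral_const_mul,
    ofReal_integral_eq_lintegral_ofReal ((Real.GammaIntegral_convergent hp').const_mul _)
      (ae_restrict_of_forall_mem measurableSet_Ioi fun t (ht : 0 < t) => by positivity)]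
  refine setLIntegral_mono' measurableSet_Ioi fun t (ht : 0 < t) => ?_
  have hpow : √(t / b) ^ p = b ^ (-(p / 2)) * t ^ (p / 2) := by
    rw [← Real.rpow_div_two_eq_sqrt p (by positivity), Real.div_rpow ht.le hb.le,
      Real.rpow_neg hb.le, div_eq_inv_mul]
  calc ENNReal.ofReal (Real.exp (-t)) * σ (ball x √(t / b))
      ≤ ENNReal.ofReal (Real.exp (-t)) * ENNReal.ofReal (c * √(t / b) ^ p) := by
        gcongr
        exact hσ _ (by positivity)
    _ = ENNReal.ofReal (c * b ^ (-(p / 2)) * (Real.exp (-t) * t ^ (p / 2 + 1 - 1))) := by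
        rw [← ENNReal.ofReal_mul (by positivity), hpow, add_sub_cancel_right]
        ring_nf

lemma integrable_exp_neg_mul_dist_sq_of_measure_ball_le_exp (hb : 0 < b) (hab : a < b)
    (hσ : ∀ r, 0 < r → σ (ball x r) ≤ ENNReal.ofReal (C * Real.exp (a * r ^ 2))) :
    Integrable (fun y => Real.exp (-b * dist y x ^ 2)) σ := by
  refine ⟨by fun_prop, ?_⟩
  have hrate : 0 < 1 - a / b := sub_pos.2 ((div_lt_one hb).2 hab)
  rw [hasFiniteIntegral_iff_ofReal (.of_forall fun _ => (Real.exp_pos _).le),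
    lintegral_exp_neg_mul_dist_sq σ x hb]
  refine lt_of_le_of_lt (setLIntegral_mono' measurableSet_Ioi fun t (ht : 0 < t) => ?_)
    ((exp_neg_integrableOn_Ioi 0 hrate).const_mul C).lintegral_lt_top
  calc ENNReal.ofReal (Real.exp (-t)) * σ (ball x √(t / b))
      ≤ ENNReal.ofReal (Real.exp (-t)) * ENNReal.ofReal (C * Real.exp (a * √(t / b) ^ 2)) := by
        gcongr
        exact hσ _ (by positivity)
    _ = ENNReal.ofReal (C * Real.exp (-(1 - a / b) * t)) := by
        rw [← ENNReal.ofReal_mul (by positivity), Real.sq_sqrt (by positivity), mul_left_comm,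
          ← Real.exp_add]
        ring_nf

lemma integrable_exp_neg_mul_dist_sq_of_tempered (hb : 0 < b) (hC : 0 ≤ C) (hN : 0 ≤ N)
    (hσ : ∀ r, 0 < r → σ (ball x r) ≤ ENNReal.ofReal (C * (1 + r) ^ N)) :
    Integrable (fun y => Real.exp (-b * dist y x ^ 2)) σ := by
  refine integrable_exp_neg_mul_dist_sq_of_measure_ball_le_exp
    (C := C * Real.exp (N ^ 2 / (4 * (b / 2)))) hb (half_lt_self hb) fun r hr =>
      (hσ r hr).trans (ENNReal.ofReal_le_ofReal ?_)
  rw [mul_assoc]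
  gcongr
  exact one_add_rpow_le_exp_mul_exp_sq hN (half_pos hb) hr.le

lemma integrable_exp_neg_mul_dist_sq_mono
    (hint : Integrable (fun y => Real.exp (-b₀ * dist y x ^ 2)) σ) (hb : b₀ ≤ b) :
    Integrable (fun y => Real.exp (-b * dist y x ^ 2)) σ := by
  refine hint.mono' (by fun_prop) (.of_forall fun y => ?_)
  rw [Real.norm_of_nonneg (Real.exp_pos _).le]
  gcongr

lemma tendsto_rpow_mul_setIntegral_compl_ball_exp_neg_mul_dist_sq
    (hint : Integrable (fun y => Real.exp (-b₀ * dist y x ^ 2)) σ) (hδ : 0 < δ) (s : ℝ) :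
    Tendsto (fun b : ℝ => b ^ s * ∫ y in (ball x δ)ᶜ, Real.exp (-b * dist y x ^ 2) ∂σ)
      atTop (𝓝 0) := by
  set I := ∫ y in (ball x δ)ᶜ, Real.exp (-b₀ * dist y x ^ 2) ∂σ
  have htail : ∀ b, b₀ ≤ b → ∫ y in (ball x δ)ᶜ, Real.exp (-b * dist y x ^ 2) ∂σ ≤
      Real.exp (-δ ^ 2 * b) * (Real.exp (b₀ * δ ^ 2) * I) := fun b hb => by
    rw [← mul_assoc, ← Real.exp_add, ← integral_const_mul]
    refine setIntegral_mono_on (integrable_exp_neg_mul_dist_sq_mono hint hb).integrableOn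
      (hint.integrableOn.const_mul _) isOpen_ball.measurableSet.compl fun y hy => ?_
    have hdist : δ ^ 2 ≤ dist y x ^ 2 := by gcongr; simpa using hy
    rw [← Real.exp_add, Real.exp_le_exp]
    linarith [mul_nonneg (sub_nonneg.2 hb) (sub_nonneg.2 hdist)]
  have hlim := (tendsto_rpow_mul_exp_neg_mul_atTop_nhds_zero s (δ ^ 2) (by positivity)).mul_const
    (Real.exp (b₀ * δ ^ 2) * I)
  rw [zero_mul] at hlim
  refine squeeze_zero' ?_ ?_ hlim
  · filter_upwards [eventually_ge_atTop 0] with b hb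
    positivity
  · filter_upwards [eventually_ge_atTop 0, eventually_ge_atTop b₀] with b hb hb₀
    rw [mul_assoc]
    gcongr
    exact htail b hb₀

lemma rpow_mul_setIntegral_ball_exp_neg_mul_dist_sq_le (hb : 0 < b) (hp : 0 ≤ p) (hδ : 0 < δ)
    (hfin : σ (ball x δ) ≠ ⊤) (hσ : ∀ r ∈ Ioc 0 δ, σ.real (ball x r) ≤ c * r ^ p) :
    b ^ (p / 2) * ∫ y in ball x δ, Real.exp (-b * dist y x ^ 2) ∂σ ≤
      c * Real.Gamma (p / 2 + 1) := by
  have hc : 0 ≤ c := nonneg_of_mul_nonneg_left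
    (measureReal_nonneg.trans (hσ δ ⟨hδ, le_rfl⟩)) (by positivity)
  have hrestrict : ∀ r, 0 < r → σ.restrict (ball x δ) (ball x r) ≤ ENNReal.ofReal (c * r ^ p) := by
    intro r hr
    calc σ.restrict (ball x δ) (ball x r) ≤ σ (ball x (min r δ)) := by
          rw [Measure.restrict_apply measurableSet_ball]
          exact measure_mono fun y hy => mem_ball.2 (lt_min hy.1 hy.2)
      _ = ENNReal.ofReal (σ.real (ball x (min r δ))) :=
          (ofReal_measureReal (measure_ne_top_of_subset (by gcongr; simp) hfin)).symm
      _ ≤ ENNReal.ofReal (c * r ^ p) := by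
          gcongr
          refine (hσ _ ⟨by positivity, min_le_right _ _⟩).trans ?_
          gcongr
          exact min_le_left _ _
  have hintegral : ∫ y in ball x δ, Real.exp (-b * dist y x ^ 2) ∂σ ≤
      c * b ^ (-(p / 2)) * Real.Gamma (p / 2 + 1) := by
    rw [integral_eq_lintegral_of_nonneg_ae (.of_forall fun _ => (Real.exp_pos _).le) (by fun_prop)]
    exact ENNReal.toReal_le_of_le_ofReal (by positivity)
      (lintegral_exp_neg_mul_dist_sq_le_of_measure_ball_le_rpow hb (by linarith) hc hrestrict)
  calc b ^ (p / 2) * ∫ y in ball x δ, Real.exp (-b * dist y x ^ 2) ∂σ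
      ≤ b ^ (p / 2) * (c * b ^ (-(p / 2)) * Real.Gamma (p / 2 + 1)) := by gcongr
    _ = c * Real.Gamma (p / 2 + 1) := by
        rw [Real.rpow_neg hb.le]
        field_simp

theorem tendsto_rpow_mul_integral_exp_of_tendsto_measureReal_ball_div_rpow (hp : 0 ≤ p)
    (hint : Integrable (fun y => Real.exp (-b₀ * dist y x ^ 2)) σ)
    (hσ : Tendsto (fun ε => σ.real (ball x ε) / ε ^ p) (𝓝[>] 0) (𝓝 0)) :
    Tendsto (fun b : ℝ => b ^ (p / 2) * ∫ y, Real.exp (-b * dist y x ^ 2) ∂σ) atTop (𝓝 0) := by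
  refine tendsto_order.2 ⟨fun e he => ?_, fun e he => ?_⟩
  · filter_upwards [eventually_ge_atTop 0] with b hb
    exact he.trans_le (by positivity)
  have hgamma : 0 < Real.Gamma (p / 2 + 1) := Real.Gamma_pos_of_pos (by positivity)
  obtain ⟨δ, hδ, hsmall⟩ := mem_nhdsGT_iff_exists_Ioc_subset.1
    (hσ.eventually_lt_const (u := e / 2 / Real.Gamma (p / 2 + 1)) (by positivity))
  have hball : ∀ r ∈ Ioc 0 δ, σ.real (ball x r) ≤ e / 2 / Real.Gamma (p / 2 + 1) * r ^ p :=
    fun r hr => ((div_lt_iff₀ (Real.rpow_pos_of_pos hr.1 p)).1 (hsmall hr)).le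
  have htail := (tendsto_rpow_mul_setIntegral_compl_ball_exp_neg_mul_dist_sq hint hδ
    (p / 2)).eventually_lt_const (half_pos he)
  filter_upwards [htail, eventually_gt_atTop 0, eventually_ge_atTop b₀] with b htail_b hb hb₀
  have hint_b := integrable_exp_neg_mul_dist_sq_mono hint hb₀
  have hlocal := rpow_mul_setIntegral_ball_exp_neg_mul_dist_sq_le hb hp hδ
    (measure_ball_lt_top_of_integrable_exp hint_b hb.le δ).ne hball
  rw [div_mul_cancel₀ _ hgamma.ne'] at hlocal
  rw [← integral_add_compl isOpen_ball.measurableSet hint_b, mul_add]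
  exact (add_lt_add_of_le_of_lt hlocal htail_b).trans_eq (add_halves e)

theorem tendsto_measureReal_ball_div_rpow_of_tendsto_rpow_mul_integral_exp
    (hint : Integrable (fun y => Real.exp (-b₀ * dist y x ^ 2)) σ)
    (hσ : Tendsto (fun b : ℝ => b ^ (p / 2) * ∫ y, Real.exp (-b * dist y x ^ 2) ∂σ)
      atTop (𝓝 0)) :
    Tendsto (fun ε => σ.real (ball x ε) / ε ^ p) (𝓝[>] 0) (𝓝 0) := by
  have hscale : Tendsto (fun ε : ℝ => ε⁻¹ ^ 2) (𝓝[>] 0) atTop :=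
    (tendsto_pow_atTop two_ne_zero).comp tendsto_inv_nhdsGT_zero
  have hlim := (hσ.comp hscale).const_mul (Real.exp 1)
  rw [mul_zero] at hlim
  refine squeeze_zero' ?_ ?_ hlim
  · filter_upwards [self_mem_nhdsWithin] with ε (hε : 0 < ε)
    positivity
  filter_upwards [self_mem_nhdsWithin, hscale.eventually_ge_atTop b₀] with ε (hε : 0 < ε) hε₀
  have hmass := measureReal_ball_le_exp_mul_integral_exp
    (integrable_exp_neg_mul_dist_sq_mono hint hε₀) (by positivity) ε
  rw [← mul_pow, inv_mul_cancel₀ hε.ne', one_pow] at hmass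
  have hpow : (ε⁻¹ ^ 2) ^ (p / 2) = (ε ^ p)⁻¹ := by
    rw [Real.rpow_div_two_eq_sqrt p (by positivity), Real.sqrt_sq (by positivity),
      Real.inv_rpow hε.le]
  calc σ.real (ball x ε) / ε ^ p
      ≤ (Real.exp 1 * ∫ y, Real.exp (-ε⁻¹ ^ 2 * dist y x ^ 2) ∂σ) / ε ^ p := by gcongr
    _ = Real.exp 1 * ((ε⁻¹ ^ 2) ^ (p / 2) * ∫ y, Real.exp (-ε⁻¹ ^ 2 * dist y x ^ 2) ∂σ) := by
        rw [hpow]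
        ring

end PseudoMetricSpace

lemma tendsto_div_addHaar_real_ball_iff {E : Type*} [NormedAddCommGroup E]
    [NormedSpace ℝ E] [FiniteDimensional ℝ E] [MeasurableSpace E] [BorelSpace E]
    (μ : Measure E) [μ.IsAddHaarMeasure] (x : E) {f : ℝ → ℝ} :
    Tendsto (fun ε => f ε / μ.real (ball x ε)) (𝓝[>] 0) (𝓝 0) ↔
      Tendsto (fun ε => f ε / ε ^ (Module.finrank ℝ E : ℝ)) (𝓝[>] 0) (𝓝 0) := by
  have hunit : 0 < μ.real (ball 0 1) :=
    ENNReal.toReal_pos (measure_ball_pos μ _ one_pos).ne' measure_ball_lt_top.ne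
  have hscale : (fun ε => μ.real (ball 0 1) • (f ε / μ.real (ball x ε))) =ᶠ[𝓝[>] 0]
      fun ε => f ε / ε ^ (Module.finrank ℝ E : ℝ) := by
    filter_upwards [self_mem_nhdsWithin] with ε (hε : 0 < ε)
    have hball : μ.real (ball x ε) = ε ^ Module.finrank ℝ E * μ.real (ball 0 1) := by
      simp [measureReal_def, μ.addHaar_ball_of_pos x hε, hε.le]
    rw [hball, Real.rpow_natCast, smul_eq_mul]
    field_simp
  rw [← tendsto_const_smul_iff₀ hunit.ne', smul_zero, tendsto_congr' hscale]

theorem stmt12_general {E : Type*} [NormedAddCommGroup E] [NormedSpace ℝ E]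
    [FiniteDimensional ℝ E] [MeasurableSpace E] [BorelSpace E]
    (μ : Measure E) [μ.IsAddHaarMeasure] (σ : Measure E)
    (hσ : ∃ τ₀ : ℝ, Integrable (fun y => Real.exp (-2 * τ₀ * ‖y‖ ^ 2)) σ) :
    Tendsto (fun ε => σ.real (ball 0 ε) / μ.real (ball 0 ε)) (𝓝[>] 0) (𝓝 0) ↔
      Tendsto (fun τ : ℝ => τ ^ ((Module.finrank ℝ E : ℝ) / 2) *
        ∫ y, Real.exp (-2 * τ * ‖y‖ ^ 2) ∂σ) atTop (𝓝 0) := by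
  obtain ⟨τ₀, hτ₀⟩ := hσ
  simp only [neg_mul (2 : ℝ), ← dist_zero_right] at hτ₀ ⊢
  rw [tendsto_div_addHaar_real_ball_iff,
    tendsto_rpow_mul_comp_const_mul_atTop_iff
      (f := fun b => ∫ y, Real.exp (-b * dist y 0 ^ 2) ∂σ) two_pos]
  exact ⟨tendsto_rpow_mul_integral_exp_of_tendsto_measureReal_ball_div_rpow (Nat.cast_nonneg _) hτ₀,
    tendsto_measureReal_ball_div_rpow_of_tendsto_rpow_mul_integral_exp hτ₀⟩

/-- Let `d ≥ 1` and `σ` a positive Borel measure on `ℝ^d` with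
`σ({0}) = 0`, finite on bounded sets, and tempered (`σ(B_r(0)) ≤ C (1+r)ᴺ`). Then
spectral hyperuniformity `σ(B_ε(0))/Vol(B_ε(0)) → 0` (`ε → 0⁺`) holds if and only if
heat kernel hyperuniformity `τ^{d/2} ∫ e^{-2τ‖y‖²} dσ(y) → 0` (`τ → +∞`) holds. -/
theorem stmt12 (d : ℕ) (hd : 1 ≤ d)
    (σ : Measure (EuclideanSpace ℝ (Fin d)))
    (hσ0 : σ {0} = 0)
    (hσfin : ∀ r : ℝ, 0 < r → σ (Metric.ball 0 r) < ⊤)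
    (hσtemp : ∃ C N : ℝ, 0 < C ∧ 0 < N ∧
      ∀ r : ℝ, 0 < r → σ (Metric.ball 0 r) ≤ ENNReal.ofReal (C * (1 + r) ^ N)) :
    Tendsto (fun ε : ℝ =>
        (σ (Metric.ball 0 ε)).toReal /
          (volume (Metric.ball (0 : EuclideanSpace ℝ (Fin d)) ε)).toReal)
        (nhdsWithin 0 (Set.Ioi 0)) (nhds 0) ↔
      Tendsto (fun τ : ℝ => τ ^ ((d : ℝ) / 2) * ∫ y, Real.exp (-2 * τ * ‖y‖ ^ 2) ∂σ)
        atTop (nhds 0) := by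
  obtain ⟨C, N, hC, hN, hσ⟩ := hσtemp
  have hint := integrable_exp_neg_mul_dist_sq_of_tempered two_pos hC.le hN.le hσ
  simpa only [measureReal_def, finrank_euclideanSpace_fin] using
    stmt12_general volume σ ⟨1, by simpa only [mul_one, dist_zero_right] using hint⟩
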